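/- arXiv:2210.04283 — 2 statements merged into one kernel-verified Lean document; each statement's English description precedes it below -/
import Mathlib

section
/- Let u : ℕ → Bool be balanced and not eventually periodic. Then u is Sturmian: for every n : ℕ, the complexity p(u, n) = Set.ncard {w : Fin n → Bool | ∃ k, ∀ i, w i = u (k + i)} equals n + 1. -/
/-!
Call a word right special in `u` if it is followed by two different letters in `u`. Over a
two-letter alphabet, `p(u, n + 1) - p(u, n)` counts the right special words of length `n`, so it is
enough to show that there is exactly one. If there were none, every word of length `n` in `u` would
determine its successor, and a repeated word would make `u` eventually periodic. If there were two,
their longest common suffix `v` would make both `1 v 1` and `0 v 0` occur in `u`, against balance.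
-/

section Alphabet

variable {α : Type*}

/-- The word of length `n` occurring in `u` at position `k`. -/
def wordAt (u : ℕ → α) (n k : ℕ) : Fin n → α := fun i ↦ u (k + i)

/-- The set of words of length `n` occurring in `u` (its *factors*). Its cardinality is the
complexity `p(u, n)`. -/
def factors (u : ℕ → α) (n : ℕ) : Set (Fin n → α) := {w | ∃ k, ∀ i, w i = u (k + i)}

/-- A word is *right special* in `u` if it can be extended to the right by two different letters
and still occur in `u`. -/
def IsRightSpecial (u : ℕ → α) {n : ℕ} (w : Fin n → α) : Prop :=
  ∃ a b, a ≠ b ∧ Fin.snoc w a ∈ factors u (n + 1) ∧ Fin.snoc w b ∈ factors u (n + 1)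

/-- A sequence is *eventually periodic* if some tail of it has a positive period. -/
def IsEventuallyPeriodic (u : ℕ → α) : Prop := ∃ N T, 0 < T ∧ ∀ n, N ≤ n → u (n + T) = u n

theorem wordAt_succ_eq_snoc (u : ℕ → α) (n k : ℕ) :
    wordAt u (n + 1) k = Fin.snoc (wordAt u n k) (u (k + n)) := by
  rw [← Fin.snoc_init_self (wordAt u (n + 1) k)]
  rfl

theorem tail_wordAt (u : ℕ → α) (n k : ℕ) :
    Fin.tail (wordAt u (n + 1) k) = wordAt u n (k + 1) := by
  funext i
  simp only [Fin.tail, wordAt, Fin.val_succ, Nat.add_right_comm, Nat.add_assoc]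

theorem mem_factors_iff {u : ℕ → α} {n : ℕ} {w : Fin n → α} :
    w ∈ factors u n ↔ ∃ k, wordAt u n k = w := by
  simp only [factors, Set.mem_ofPred_eq, funext_iff, wordAt, eq_comm]

theorem wordAt_mem_factors (u : ℕ → α) (n k : ℕ) : wordAt u n k ∈ factors u n :=
  mem_factors_iff.2 ⟨k, rfl⟩

theorem ncard_factors_zero (u : ℕ → α) : (factors u 0).ncard = 1 :=
  Set.ncard_eq_one.2 ⟨wordAt u 0 0, Set.eq_singleton_iff_unique_mem.2
    ⟨wordAt_mem_factors u 0 0, fun _ _ ↦ Subsingleton.elim _ _⟩⟩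

theorem tail_mem_factors {u : ℕ → α} {n : ℕ} {w : Fin (n + 1) → α} (hw : w ∈ factors u (n + 1)) :
    Fin.tail w ∈ factors u n := by
  obtain ⟨k, rfl⟩ := mem_factors_iff.1 hw
  exact tail_wordAt u n k ▸ wordAt_mem_factors u n (k + 1)

theorem mem_factors_iff_exists_snoc_mem {u : ℕ → α} {n : ℕ} {w : Fin n → α} :
    w ∈ factors u n ↔ ∃ a, Fin.snoc w a ∈ factors u (n + 1) := by
  simp only [mem_factors_iff, wordAt_succ_eq_snoc, Fin.snoc_inj]
  grind

theorem IsRightSpecial.tail {u : ℕ → α} {n : ℕ} {w : Fin (n + 1) → α} (hw : IsRightSpecial u w) :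
    IsRightSpecial u (Fin.tail w) := by
  obtain ⟨a, b, hab, ha, hb⟩ := hw
  have tail_snoc (c : α) : Fin.tail (Fin.snoc w c : Fin (n + 2) → α) = Fin.snoc (Fin.tail w) c := by
    rw [← Fin.cons_self_tail w, ← Fin.cons_snoc_eq_snoc_cons, Fin.tail_cons, Fin.tail_cons]
  exact ⟨a, b, hab, tail_snoc a ▸ tail_mem_factors ha, tail_snoc b ▸ tail_mem_factors hb⟩

theorem wordAt_succ_eq_of_not_isRightSpecial {u : ℕ → α} {n k l : ℕ}
    (h : ¬ IsRightSpecial u (wordAt u n k)) (hkl : wordAt u n k = wordAt u n l) :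
    wordAt u (n + 1) k = wordAt u (n + 1) l := by
  have hlast : u (k + n) = u (l + n) := by
    by_contra hne
    refine h ⟨u (k + n), u (l + n), hne, ?_, ?_⟩
    · exact wordAt_succ_eq_snoc u n k ▸ wordAt_mem_factors u (n + 1) k
    · exact hkl ▸ wordAt_succ_eq_snoc u n l ▸ wordAt_mem_factors u (n + 1) l
  rw [wordAt_succ_eq_snoc, wordAt_succ_eq_snoc, hkl, hlast]

theorem isEventuallyPeriodic_of_forall_not_isRightSpecial [Finite α] {u : ℕ → α} {n : ℕ}
    (h : ∀ w : Fin n → α, ¬ IsRightSpecial u w) : IsEventuallyPeriodic u := by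
  obtain ⟨k, -, l, -, hlt, hkl⟩ := Set.infinite_univ.exists_lt_map_eq_of_mapsTo
    (Set.mapsTo_univ (wordAt u n) _) Set.finite_univ
  have hshift (m : ℕ) : wordAt u n (k + m) = wordAt u n (l + m) := by
    induction m with
    | zero => exact hkl
    | succ m ih =>
      rw [← Nat.add_assoc, ← Nat.add_assoc, ← tail_wordAt, ← tail_wordAt,
        wordAt_succ_eq_of_not_isRightSpecial (h _) ih]
  have hletter (m : ℕ) : u (k + m + n) = u (l + m + n) :=
    congrFun (wordAt_succ_eq_of_not_isRightSpecial (h _) (hshift m)) (Fin.last n)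
  refine ⟨k + n, l - k, by omega, fun x hx ↦ ?_⟩
  convert (hletter (x - k - n)).symm using 2 <;> omega

theorem ncard_eq_sum_ncard_snoc [Fintype α] {n : ℕ} (S : Set (Fin (n + 1) → α)) :
    S.ncard = ∑ a, {w : Fin n → α | Fin.snoc w a ∈ S}.ncard := by
  let e : (Σ a, {w : Fin n → α // Fin.snoc w a ∈ S}) ≃ S :=
    { toFun := fun p ↦ ⟨Fin.snoc p.2.1 p.1, p.2.2⟩
      invFun := fun w ↦ ⟨w.1 (Fin.last n), Fin.init w.1, (Fin.snoc_init_self w.1).symm ▸ w.2⟩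
      left_inv := fun _ ↦ Sigma.subtype_ext (by simp) (by simp)
      right_inv := fun w ↦ Subtype.ext (Fin.snoc_init_self w.1) }
  have hcard := Nat.card_congr e
  rw [Nat.card_sigma] at hcard
  exact hcard.symm

end Alphabet

section Binary

/-- A binary sequence is *balanced* if the numbers of `true`s in two of its factors of the same
length differ by at most one. -/
def IsBalanced (u : ℕ → Bool) : Prop :=
  ∀ n k l : ℕ,
    |(((Finset.range n).filter (fun i ↦ u (k + i) = true)).card : ℤ) -
      (((Finset.range n).filter (fun i ↦ u (l + i) = true)).card : ℤ)| ≤ 1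

/-- The number of `true`s in a binary word. -/
def trueCount {n : ℕ} (w : Fin n → Bool) : ℕ := ∑ i, (w i).toNat

theorem trueCount_wordAt (u : ℕ → Bool) (n k : ℕ) :
    trueCount (wordAt u n k) = ((Finset.range n).filter (fun i ↦ u (k + i) = true)).card := by
  simp only [trueCount, wordAt, Bool.toNat, cond_eq_ite, Finset.card_filter, Finset.sum_range]

theorem trueCount_snoc {n : ℕ} (w : Fin n → Bool) (a : Bool) :
    trueCount (Fin.snoc w a : Fin (n + 1) → Bool) = trueCount w + a.toNat := by
  simp only [trueCount, Fin.sum_univ_castSucc, Fin.snoc_castSucc, Fin.snoc_last]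

theorem trueCount_cons {n : ℕ} (a : Bool) (w : Fin n → Bool) :
    trueCount (Fin.cons a w : Fin (n + 1) → Bool) = a.toNat + trueCount w := by
  simp only [trueCount, Fin.sum_univ_succ, Fin.cons_zero, Fin.cons_succ]

theorem isRightSpecial_iff {u : ℕ → Bool} {n : ℕ} {w : Fin n → Bool} :
    IsRightSpecial u w ↔
      Fin.snoc w true ∈ factors u (n + 1) ∧ Fin.snoc w false ∈ factors u (n + 1) := by
  simp [IsRightSpecial, and_comm]

theorem ncard_factors_succ (u : ℕ → Bool) (n : ℕ) :
    (factors u (n + 1)).ncard =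
      (factors u n).ncard + {w : Fin n → Bool | IsRightSpecial u w}.ncard := by
  have hunion : factors u n =
      {w | Fin.snoc w true ∈ factors u (n + 1)} ∪ {w | Fin.snoc w false ∈ factors u (n + 1)} := by
    ext w
    rw [mem_factors_iff_exists_snoc_mem, Bool.exists_bool']
    rfl
  have hinter : {w : Fin n → Bool | IsRightSpecial u w} =
      {w | Fin.snoc w true ∈ factors u (n + 1)} ∩ {w | Fin.snoc w false ∈ factors u (n + 1)} :=
    Set.ext fun _ ↦ isRightSpecial_iff
  rw [hunion, hinter, Set.ncard_union_add_ncard_inter, ncard_eq_sum_ncard_snoc, Fintype.sum_bool]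

namespace IsBalanced

variable {u : ℕ → Bool}

theorem trueCount_le_trueCount_add_one (hu : IsBalanced u) {n : ℕ} {v w : Fin n → Bool}
    (hv : v ∈ factors u n) (hw : w ∈ factors u n) : trueCount v ≤ trueCount w + 1 := by
  obtain ⟨k, rfl⟩ := mem_factors_iff.1 hv
  obtain ⟨l, rfl⟩ := mem_factors_iff.1 hw
  have := (abs_le.1 (hu n k l)).2
  rw [trueCount_wordAt, trueCount_wordAt]
  omega

theorem cons_snoc_false_notMem_factors (hu : IsBalanced u) {n : ℕ} {v : Fin n → Bool}
    (hv : Fin.snoc (Fin.cons true v : Fin (n + 1) → Bool) true ∈ factors u (n + 2)) :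
    Fin.snoc (Fin.cons false v : Fin (n + 1) → Bool) false ∉ factors u (n + 2) := by
  intro hv'
  have := hu.trueCount_le_trueCount_add_one hv hv'
  simp only [trueCount_snoc, trueCount_cons, Bool.toNat_true, Bool.toNat_false] at this
  omega

theorem eq_of_isRightSpecial_cons (hu : IsBalanced u) {n : ℕ} {a b : Bool} {v : Fin n → Bool}
    (ha : IsRightSpecial u (Fin.cons a v : Fin (n + 1) → Bool))
    (hb : IsRightSpecial u (Fin.cons b v : Fin (n + 1) → Bool)) : a = b := by
  rw [isRightSpecial_iff] at ha hb
  cases a <;> cases b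
  · rfl
  · exact absurd ha.2 (hu.cons_snoc_false_notMem_factors hb.1)
  · exact absurd hb.2 (hu.cons_snoc_false_notMem_factors ha.1)
  · rfl

theorem isRightSpecial_unique (hu : IsBalanced u) {n : ℕ} {v w : Fin n → Bool}
    (hv : IsRightSpecial u v) (hw : IsRightSpecial u w) : v = w := by
  induction n with
  | zero => exact Subsingleton.elim v w
  | succ n ih =>
    have htail : Fin.tail v = Fin.tail w := ih hv.tail hw.tail
    rw [← Fin.cons_self_tail v] at hv ⊢
    rw [← Fin.cons_self_tail w, ← htail] at hw ⊢
    rw [hu.eq_of_isRightSpecial_cons hv hw]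

theorem ncard_isRightSpecial (hu : IsBalanced u) (hnp : ¬ IsEventuallyPeriodic u) (n : ℕ) :
    {w : Fin n → Bool | IsRightSpecial u w}.ncard = 1 := by
  obtain ⟨w, hw⟩ : ∃ w : Fin n → Bool, IsRightSpecial u w := by
    by_contra! h
    exact hnp (isEventuallyPeriodic_of_forall_not_isRightSpecial h)
  exact Set.ncard_eq_one.2 ⟨w, Set.eq_singleton_iff_unique_mem.2
    ⟨hw, fun _ hv ↦ hu.isRightSpecial_unique hv hw⟩⟩

end IsBalanced

end Binary

theorem balanced_not_eventually_periodic_is_sturmian (u : ℕ → Bool)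
    (hbal : ∀ n k l : ℕ,
      |(((Finset.range n).filter (fun i => u (k + i) = true)).card : ℤ) -
        (((Finset.range n).filter (fun i => u (l + i) = true)).card : ℤ)| ≤ 1)
    (hnp : ¬ ∃ (N : ℕ) (T : ℕ), 0 < T ∧ ∀ n : ℕ, N ≤ n → u (n + T) = u n) :
    ∀ n : ℕ,
      Set.ncard {w : Fin n → Bool | ∃ k : ℕ, ∀ i : Fin n, w i = u (k + i)} = n + 1 := by
  intro n
  change (factors u n).ncard = n + 1
  induction n with
  | zero => exact ncard_factors_zero u
  | succ n ih => rw [ncard_factors_succ, ih, IsBalanced.ncard_isRightSpecial hbal hnp]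
end

section
/- Let u : ℕ → Bool and suppose there exists n : ℕ such that p(u, n + 1) = p(u, n), where p(u, n) = Set.ncard {w : Fin n → Bool | ∃ k, ∀ i, w i = u (k + i)}. Then u is eventually periodic: there exist N : ℕ and T > 0 such that u(m + T) = u(m) for all m ≥ N. -/
/-!
Deleting the last letter maps the factors of length `n + 1` onto those of length `n`, so when there
are no more of the former than of the latter, a factor of length `n` determines the letter that
follows it. The factor of length `n + 1` at position `k` then determines the one at position
`k + 1`; as only finitely many such factors exist, two positions carry the same one, and from there
on the sequence repeats.
-/

variable {α β : Type*}

/-- Eventual periodicity of a sequence: some positive `T` is a period from some index `N` on. -/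
def EventuallyPeriodic (u : ℕ → α) : Prop :=
  ∃ N T : ℕ, 0 < T ∧ ∀ m : ℕ, N ≤ m → u (m + T) = u m

theorem EventuallyPeriodic.comp {u : ℕ → α} (hu : EventuallyPeriodic u) (f : α → β) :
    EventuallyPeriodic (f ∘ u) := by
  obtain ⟨N, T, hT, h⟩ := hu
  exact ⟨N, T, hT, fun m hm => congrArg f (h m hm)⟩

theorem eventuallyPeriodic_of_finite_range_of_succ {u : ℕ → α} (hfin : (Set.range u).Finite)
    (hsucc : ∀ j k, u j = u k → u (j + 1) = u (k + 1)) : EventuallyPeriodic u := by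
  have hninj : ¬ u.Injective := fun hinj => Set.infinite_range_of_injective hinj hfin
  obtain ⟨j, k, hjk, hlt⟩ : ∃ j k, u k = u j ∧ j < k := by
    obtain ⟨j, k, hjk, hne⟩ := Function.not_injective_iff.mp hninj
    rcases hne.lt_or_gt with hlt | hlt
    exacts [⟨j, k, hjk.symm, hlt⟩, ⟨k, j, hjk, hlt⟩]
  refine ⟨j, k - j, Nat.sub_pos_of_lt hlt, fun m hm => ?_⟩
  induction m, hm using Nat.le_induction with
  | base => rwa [Nat.add_sub_cancel' hlt.le]
  | succ m _ ih => simpa only [Nat.add_right_comm] using hsucc _ _ ih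

/-- The factor (block of consecutive letters) of length `n` of the sequence `u` that starts at
position `k`, as a word indexed by `Fin n`. -/
def factorAt (u : ℕ → α) (n k : ℕ) : Fin n → α :=
  fun i => u (k + i)

/-- The set of all factors of length `n` of the sequence `u`. -/
def factorSet (u : ℕ → α) (n : ℕ) : Set (Fin n → α) :=
  {w | ∃ k : ℕ, ∀ i : Fin n, w i = u (k + i)}

/-- The factor complexity function `p(u, n)`, counting the distinct factors of length `n` of `u`;
it takes the junk value `0` when there are infinitely many. -/
noncomputable def factorComplexity (u : ℕ → α) (n : ℕ) : ℕ :=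
  (factorSet u n).ncard

theorem init_factorAt (u : ℕ → α) (n k : ℕ) :
    Fin.init (factorAt u (n + 1) k) = factorAt u n k :=
  rfl

theorem tail_factorAt (u : ℕ → α) (n k : ℕ) :
    Fin.tail (factorAt u (n + 1) k) = factorAt u n (k + 1) := by
  funext i
  simp only [Fin.tail, factorAt, Fin.val_succ, Nat.add_assoc, Nat.add_comm 1]

theorem factorSet_eq_range_factorAt (u : ℕ → α) (n : ℕ) :
    factorSet u n = Set.range (factorAt u n) :=
  Set.ext fun _ => exists_congr fun _ => funext_iff.symm.trans eq_comm

theorem image_init_factorSet (u : ℕ → α) (n : ℕ) :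
    Fin.init '' factorSet u (n + 1) = factorSet u n := by
  simp only [factorSet_eq_range_factorAt, ← Set.range_comp, Function.comp_def, init_factorAt]

theorem injOn_init_factorSet_of_factorComplexity_succ_le {u : ℕ → α} {n : ℕ}
    (hfin : (factorSet u (n + 1)).Finite)
    (h : factorComplexity u (n + 1) ≤ factorComplexity u n) :
    Set.InjOn Fin.init (factorSet u (n + 1)) := by
  refine Set.injOn_of_ncard_image_eq (le_antisymm (Set.ncard_image_le hfin) ?_) hfin
  rwa [image_init_factorSet]

theorem factorAt_succ_eq_of_injOn_init {u : ℕ → α} {n j k : ℕ}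
    (hinj : Set.InjOn Fin.init (factorSet u (n + 1)))
    (hjk : factorAt u (n + 1) j = factorAt u (n + 1) k) :
    factorAt u (n + 1) (j + 1) = factorAt u (n + 1) (k + 1) := by
  rw [factorSet_eq_range_factorAt] at hinj
  refine hinj (Set.mem_range_self _) (Set.mem_range_self _) ?_
  rw [init_factorAt, init_factorAt, ← tail_factorAt, ← tail_factorAt, hjk]

theorem complexity_stabilizes_eventually_periodic_general {u : ℕ → α} {n : ℕ}
    (hfin : (factorSet u (n + 1)).Finite)
    (h : factorComplexity u (n + 1) ≤ factorComplexity u n) :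
    EventuallyPeriodic u := by
  have hinj := injOn_init_factorSet_of_factorComplexity_succ_le hfin h
  have hfactor : EventuallyPeriodic (factorAt u (n + 1)) :=
    eventuallyPeriodic_of_finite_range_of_succ (factorSet_eq_range_factorAt u (n + 1) ▸ hfin)
      fun _ _ => factorAt_succ_eq_of_injOn_init hinj
  exact hfactor.comp fun w => w 0

theorem complexity_stabilizes_eventually_periodic (u : ℕ → Bool)
    (h : ∃ n : ℕ,
      Set.ncard {w : Fin (n + 1) → Bool | ∃ k : ℕ, ∀ i : Fin (n + 1), w i = u (k + i)} =
      Set.ncard {w : Fin n → Bool | ∃ k : ℕ, ∀ i : Fin n, w i = u (k + i)}) :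
    ∃ (N : ℕ) (T : ℕ), 0 < T ∧ ∀ m : ℕ, N ≤ m → u (m + T) = u m := by
  obtain ⟨n, hn⟩ := h
  exact complexity_stabilizes_eventually_periodic_general (Set.toFinite _) hn.le
end
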